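/- Let d ≥ 1 and let σ : Δ_d → ℝ^N be C^1 on all open faces and satisfy Stokes. Then the cone σ̂ : Δ_{d+1} → ℝ^N is C^1 on all open faces and satisfies Stokes. -/

import Mathlib

open MeasureTheory Set

noncomputable section

/-- The standard `d`-simplex `Δ_d ⊆ ℝ^d`. -/
def simplexSet (d : ℕ) : Set (Fin d → ℝ) :=
  {b | (∀ i, 0 ≤ b i) ∧ ∑ i, b i ≤ 1}

/-- The `i`-th face map `δ_i : Δ_d → Δ_{d+1}` (as a map of ambient spaces):
`δ_0 b = (1 - ∑ b, b)` and, for `i ≥ 1`, `δ_i` inserts a `0` at position `i - 1`. -/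
def faceMap (d : ℕ) (i : Fin (d + 2)) (b : Fin d → ℝ) : Fin (d + 1) → ℝ :=
  if h : i = 0 then Fin.cons (1 - ∑ j, b j) b
  else Fin.insertNth (i.pred h) 0 b

/-- Continuous `d`-multilinear forms on `ℝ^N` (on finite-dimensional spaces every
multilinear form is automatically continuous). -/
abbrev Form (N d : ℕ) : Type :=
  ContinuousMultilinearMap ℝ (fun _ : Fin d => (Fin N → ℝ)) ℝ

/-- A multilinear form is alternating if it vanishes whenever two arguments agree. -/
def IsAlternatingForm {N d : ℕ} (A : Form N d) : Prop :=
  ∀ v : Fin d → (Fin N → ℝ), ∀ i j, v i = v j → i ≠ j → A v = 0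

/-- The pullback density `ω(σ(x))(Dσ(x)e_1, …, Dσ(x)e_d)` of a `d`-form `ω` along `σ`
at `x`, where `e_1, …, e_d` is the standard basis of `ℝ^d`. -/
def pullbackDensity {d N : ℕ} (σ : (Fin d → ℝ) → (Fin N → ℝ))
    (ω : (Fin N → ℝ) → Form N d) (x : Fin d → ℝ) : ℝ :=
  ω (σ x) fun j => fderiv ℝ σ x (Pi.single j 1)

/-- A simplex `σ : Δ_d → ℝ^N` has finite volume if for every family of alternating
`d`-forms, continuous on `σ(Δ_d)`, the pullback density along `σ` is Lebesgue
integrable on the interior of `Δ_d`. -/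
def FiniteVolume {d N : ℕ} (σ : (Fin d → ℝ) → (Fin N → ℝ)) : Prop :=
  ∀ ω : (Fin N → ℝ) → Form N d,
    (∀ y ∈ σ '' simplexSet d, IsAlternatingForm (ω y)) →
    ContinuousOn ω (σ '' simplexSet d) →
    IntegrableOn (pullbackDensity σ ω) (interior (simplexSet d))

/-- The pullback density of the exterior derivative `dω` of a `d`-form `ω` along a
`(d+1)`-simplex `σ` at `x`:
`dω(y)(v_0, …, v_d) = ∑ i, (-1)^i (Dω(y)v_i)(v_0, …, v̂_i, …, v_d)` with `v_i = Dσ(x)e_i`. -/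
def pullbackDensityD {d N : ℕ} (σ : (Fin (d + 1) → ℝ) → (Fin N → ℝ))
    (ω : (Fin N → ℝ) → Form N d) (x : Fin (d + 1) → ℝ) : ℝ :=
  ∑ i : Fin (d + 1), (-1 : ℝ) ^ (i : ℕ) *
    fderiv ℝ ω (σ x) (fderiv ℝ σ x (Pi.single i 1))
      (fun j => fderiv ℝ σ x (Pi.single (i.succAbove j) 1))

/-- A `(d+1)`-simplex `σ` (C¹ on all open faces) satisfies Stokes if it and all of its
faces have finite volume, and Stokes' formula
`∫_{Δ_{d+1}} σ^*(dω) = ∑ i (-1)^i ∫_{Δ_d} (σ ∘ δ_i)^*(ω)` holds for every C¹ family of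
alternating `d`-forms `ω` on an open neighbourhood of `σ(Δ_{d+1})`. -/
def SatisfiesStokes {d N : ℕ} (σ : (Fin (d + 1) → ℝ) → (Fin N → ℝ)) : Prop :=
  FiniteVolume σ ∧ (∀ i : Fin (d + 2), FiniteVolume (σ ∘ faceMap d i)) ∧
  ∀ (V : Set (Fin N → ℝ)) (ω : (Fin N → ℝ) → Form N d),
    IsOpen V → σ '' simplexSet (d + 1) ⊆ V →
    (∀ y ∈ V, IsAlternatingForm (ω y)) → ContDiffOn ℝ 1 ω V →
    ∫ x in interior (simplexSet (d + 1)), pullbackDensityD σ ω x =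
      ∑ i : Fin (d + 2), (-1 : ℝ) ^ (i : ℕ) *
        ∫ b in interior (simplexSet d), pullbackDensity (σ ∘ faceMap d i) ω b

/-- `σ : Δ_d → ℝ^N` is C¹ on all open faces: it is continuous on `Δ_d`, C¹ on the
interior of `Δ_d`, and all iterated face composites `σ ∘ δ_{i_1} ∘ ⋯ ∘ δ_{i_k}` have
the same property. -/
def C1OnOpenFaces (N : ℕ) : ∀ d, ((Fin d → ℝ) → (Fin N → ℝ)) → Prop
  | 0, σ => ContinuousOn σ (simplexSet 0) ∧ ContDiffOn ℝ 1 σ (interior (simplexSet 0))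
  | d + 1, σ => ContinuousOn σ (simplexSet (d + 1)) ∧
      ContDiffOn ℝ 1 σ (interior (simplexSet (d + 1))) ∧
      ∀ i : Fin (d + 2), C1OnOpenFaces N d (σ ∘ faceMap d i)

/-- `σ` and all of its iterated face composites have finite volume. -/
def FiniteVolumeFaces (N : ℕ) : ∀ d, ((Fin d → ℝ) → (Fin N → ℝ)) → Prop
  | 0, σ => FiniteVolume σ
  | d + 1, σ => FiniteVolume σ ∧ ∀ i : Fin (d + 2), FiniteVolumeFaces N d (σ ∘ faceMap d i)

/-- `σ` and all of its iterated face composites satisfy Stokes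
(a `0`-simplex satisfies Stokes by convention). -/
def SatisfiesStokesFaces (N : ℕ) : ∀ d, ((Fin d → ℝ) → (Fin N → ℝ)) → Prop
  | 0, _ => True
  | d + 1, σ => SatisfiesStokes σ ∧ ∀ i : Fin (d + 2), SatisfiesStokesFaces N d (σ ∘ faceMap d i)

/-- The cone `σ̂ : Δ_{d+1} → ℝ^N` over a simplex `σ : Δ_d → ℝ^N`:
`σ̂(a_0, …, a_d) = A ⬝ σ(a_1/A, …, a_d/A)` with `A = ∑ a_i` if `A ≠ 0`, and `0` else. -/
def cone {d N : ℕ} (σ : (Fin d → ℝ) → (Fin N → ℝ)) (a : Fin (d + 1) → ℝ) : Fin N → ℝ :=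
  if (∑ i, a i) = 0 then 0 else (∑ i, a i) • σ fun j => a j.succ / ∑ i, a i

/-- The map `q(t, b) = ((1-t)(1-∑ b), (1-t)b_1, …, (1-t)b_d)` from `[0,1] × Δ_d`
onto `Δ_{d+1}`. -/
def qMap (d : ℕ) (p : ℝ × (Fin d → ℝ)) : Fin (d + 1) → ℝ :=
  Fin.cons ((1 - p.1) * (1 - ∑ j, p.2 j)) fun j => (1 - p.1) * p.2 j

/-- The inverse `i(a_0, …, a_d) = (1 - A, a_1/A, …, a_d/A)`, `A = ∑ a_i`, of `q`. -/
def iMap (d : ℕ) (a : Fin (d + 1) → ℝ) : ℝ × (Fin d → ℝ) :=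
  (1 - ∑ i, a i, fun j => a j.succ / ∑ i, a i)

lemma mem_interior_simplexSet {d : ℕ} {b : Fin d → ℝ} :
    b ∈ interior (simplexSet d) ↔ (∀ i, 0 < b i) ∧ ∑ i, b i < 1 := by
  constructor
  · intro hb
    refine ⟨fun i => ?_, ?_⟩
    · have h1 : b ∈ interior ((fun x : Fin d → ℝ => x i) ⁻¹' Ici 0) :=
        interior_mono (fun x hx => hx.1 i) hb
      rw [← (isOpenMap_eval i).preimage_interior_eq_interior_preimage (continuous_apply i),
        interior_Ici] at h1
      exact h1
    · rcases Nat.eq_zero_or_pos d with h | h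
      · subst h; simp
      · let L : (Fin d → ℝ) →ₗ[ℝ] ℝ := ∑ i, LinearMap.proj i
        have hL : ∀ x, L x = ∑ i, x i := fun x => by simp [L]
        have hsurj : Function.Surjective L := fun y =>
          ⟨Pi.single ⟨0, h⟩ y, by rw [hL]; simp⟩
        have hcont : Continuous L := L.continuous_of_finiteDimensional
        have hopen : IsOpenMap L := L.isOpenMap_of_finiteDimensional hsurj
        have h1 : b ∈ interior (L ⁻¹' Iic 1) :=
          interior_mono (fun x hx => by
            show L x ≤ 1
            rw [hL]; exact hx.2) hb
        rw [← hopen.preimage_interior_eq_interior_preimage hcont, interior_Iic] at h1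
        have : L b < 1 := h1
        rwa [hL] at this
  · intro hb
    have ho : IsOpen {b : Fin d → ℝ | (∀ i, 0 < b i) ∧ ∑ i, b i < 1} := by
      apply IsOpen.and
      · simp only [ofPred_forall]
        exact isOpen_iInter_of_finite fun i => isOpen_lt continuous_const (continuous_apply i)
      · exact isOpen_lt (by fun_prop) continuous_const
    refine interior_maximal (fun x hx => ?_) ho hb
    obtain ⟨h1, h2⟩ := hx
    exact ⟨fun i => (h1 i).le, h2.le⟩

lemma isCompact_simplexSet (d : ℕ) : IsCompact (simplexSet d) := by
  have hc : IsClosed (simplexSet d) := by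
    unfold simplexSet
    apply IsClosed.and
    · simp only [ofPred_forall]
      exact isClosed_iInter fun i => isClosed_le continuous_const (continuous_apply i)
    · exact isClosed_le (by fun_prop) continuous_const
  refine IsCompact.of_isClosed_subset (isCompact_Icc (a := (0 : Fin d → ℝ)) (b := 1)) hc ?_
  intro b hb
  refine ⟨fun i => hb.1 i, fun i => ?_⟩
  exact (Finset.single_le_sum (fun j _ => hb.1 j) (Finset.mem_univ i)).trans hb.2

lemma zero_mem_simplexSet (d : ℕ) : (0 : Fin d → ℝ) ∈ simplexSet d := by
  simp [simplexSet]

/-- polar-type coordinates on the simplex -/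
def pMap (d : ℕ) (z : ℝ × (Fin d → ℝ)) : Fin (d + 1) → ℝ :=
  Fin.cons (z.1 - ∑ j, z.1 * z.2 j) (fun j => z.1 * z.2 j)

lemma sum_pMap {d : ℕ} (z : ℝ × (Fin d → ℝ)) : ∑ i, pMap d z i = z.1 := by
  simp [pMap, Fin.sum_univ_succ]

lemma continuous_pMap (d : ℕ) : Continuous (pMap d) := by
  refine continuous_pi fun i => ?_
  refine Fin.cases ?_ (fun j => ?_) i
  · simp only [pMap, Fin.cons_zero]; fun_prop
  · simp only [pMap, Fin.cons_succ]; fun_prop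

lemma cone_pMap {d N : ℕ} (σ : (Fin d → ℝ) → (Fin N → ℝ)) (z : ℝ × (Fin d → ℝ)) :
    cone σ (pMap d z) = z.1 • σ z.2 := by
  unfold cone
  rw [sum_pMap]
  split_ifs with h
  · simp [h]
  · congr 2
    ext j
    simp only [pMap, Fin.cons_succ]
    field_simp

lemma pMap_mem_interior_iff {d : ℕ} {s : ℝ} {b : Fin d → ℝ} (hs : s ∈ Ioo (0 : ℝ) 1) :
    pMap d (s, b) ∈ interior (simplexSet (d + 1)) ↔ b ∈ interior (simplexSet d) := by
  rw [mem_interior_simplexSet, mem_interior_simplexSet, sum_pMap]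
  obtain ⟨h0, h1⟩ := hs
  simp only [Fin.forall_fin_succ, pMap, Fin.cons_zero, Fin.cons_succ, h1, and_true,
    ← Finset.mul_sum, mul_pos_iff_of_pos_left h0]
  rw [and_comm]
  refine and_congr_right fun _ => ?_
  constructor
  · intro h; by_contra! hh; nlinarith
  · intro h; nlinarith

lemma pMap_mem {d : ℕ} {s : ℝ} {b : Fin d → ℝ} (hs : s ∈ Icc (0 : ℝ) 1)
    (hb : b ∈ simplexSet d) : pMap d (s, b) ∈ simplexSet (d + 1) := by
  refine ⟨?_, by rw [sum_pMap]; exact hs.2⟩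
  intro i
  refine Fin.cases ?_ (fun j => ?_) i
  · simp only [pMap, Fin.cons_zero, ← Finset.mul_sum]
    nlinarith [hs.1, hb.2]
  · simp only [pMap, Fin.cons_succ]
    exact mul_nonneg hs.1 (hb.1 j)

/-- the normalised point -/
lemma exists_pMap {d : ℕ} {a : Fin (d + 1) → ℝ} (ha : a ∈ simplexSet (d + 1)) :
    ∃ s ∈ Icc (0 : ℝ) 1, ∃ b ∈ simplexSet d, pMap d (s, b) = a := by
  have hA0 : 0 ≤ ∑ i, a i := Finset.sum_nonneg fun i _ => ha.1 i
  refine ⟨∑ i, a i, ⟨hA0, ha.2⟩, fun j => a j.succ / ∑ i, a i, ⟨?_, ?_⟩, ?_⟩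
  · exact fun i => div_nonneg (ha.1 _) hA0
  · rw [← Finset.sum_div]
    apply div_le_one_of_le₀ _ hA0
    rw [Fin.sum_univ_succ]
    linarith [ha.1 0]
  · rcases hA0.eq_or_lt with h | h
    · have hz : ∀ i, a i = 0 := fun i =>
        (Finset.sum_eq_zero_iff_of_nonneg (fun i _ => ha.1 i)).1 h.symm i (Finset.mem_univ i)
      ext i
      refine Fin.cases ?_ (fun j => ?_) i <;> simp [pMap, hz]
    · have hm : ∀ j : Fin d, (∑ i, a i) * (a j.succ / ∑ i, a i) = a j.succ := fun j => by
        field_simp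
      ext i
      refine Fin.cases ?_ (fun j => ?_) i
      · simp only [pMap, Fin.cons_zero, hm]
        rw [Fin.sum_univ_succ]; ring
      · simp only [pMap, Fin.cons_succ, hm]

/-- product measure on the cylinder -/
def cylMeasure (d : ℕ) : Measure (ℝ × (Fin d → ℝ)) :=
  (volume.restrict (Ioo (0 : ℝ) 1)).prod (volume.restrict (interior (simplexSet d)))

lemma cylMeasure_eq (d : ℕ) : cylMeasure d =
    volume.restrict (Ioo (0 : ℝ) 1 ×ˢ interior (simplexSet d)) := by
  unfold cylMeasure
  rw [Measure.prod_restrict]; rfl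

lemma measurableSet_cyl (d : ℕ) :
    MeasurableSet (Ioo (0 : ℝ) 1 ×ˢ interior (simplexSet d)) :=
  measurableSet_Ioo.prod isOpen_interior.measurableSet

lemma lintegral_simplex {d : ℕ} {g : (Fin (d + 1) → ℝ) → ENNReal} (hg : Measurable g) :
    ∫⁻ a in interior (simplexSet (d + 1)), g a =
      ∫⁻ z, ENNReal.ofReal (z.1 ^ d) * g (pMap d z) ∂(cylMeasure d) := by
  have hmeas : MeasurableSet (interior (simplexSet (d + 1))) := isOpen_interior.measurableSet
  set G : (Fin (d + 1) → ℝ) → ENNReal := (interior (simplexSet (d + 1))).indicator g with hG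
  have hGm : Measurable G := hg.indicator hmeas
  have hm2 : Measurable fun z : ℝ × (Fin d → ℝ) => (Fin.cons z.1 z.2 : Fin (d + 1) → ℝ) := by
    refine measurable_pi_lambda _ fun i => ?_
    refine Fin.cases ?_ (fun j => ?_) i
    · simp only [Fin.cons_zero]; fun_prop
    · simp only [Fin.cons_succ]; fun_prop
  have hm3 : Measurable fun z : ℝ × (Fin d → ℝ) =>
      G (Fin.cons (z.1 - ∑ j, z.2 j) z.2 : Fin (d + 1) → ℝ) :=
    hGm.comp (hm2.comp (f := fun z : ℝ × (Fin d → ℝ) => (z.1 - ∑ j, z.2 j, z.2)) (by fun_prop))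
  calc ∫⁻ a in interior (simplexSet (d + 1)), g a = ∫⁻ a, G a := (lintegral_indicator hmeas g).symm
    _ = ∫⁻ z : ℝ × (Fin d → ℝ), G (Fin.cons z.1 z.2) := by
        have := (volume_preserving_piFinSuccAbove (fun _ : Fin (d + 1) => ℝ) 0).symm
        rw [← this.lintegral_comp hGm]
        refine lintegral_congr fun z => congrArg G ?_
        exact Fin.insertNth_zero' z.1 z.2
    _ = ∫⁻ c : Fin d → ℝ, ∫⁻ x : ℝ, G (Fin.cons x c) := by
        rw [Measure.volume_eq_prod]
        exact lintegral_prod_symm' _ (hGm.comp hm2)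
    _ = ∫⁻ c : Fin d → ℝ, ∫⁻ x : ℝ, G (Fin.cons (x - ∑ j, c j) c) := by
        refine lintegral_congr fun c => ?_
        exact (lintegral_sub_right_eq_self (fun x => G (Fin.cons x c)) (∑ j, c j)).symm
    _ = ∫⁻ x : ℝ, ∫⁻ c : Fin d → ℝ, G (Fin.cons (x - ∑ j, c j) c) := by
        rw [lintegral_lintegral_swap]
        exact (hm3.comp measurable_swap).aemeasurable
    _ = ∫⁻ x in Ioo (0 : ℝ) 1, ∫⁻ c : Fin d → ℝ, G (Fin.cons (x - ∑ j, c j) c) := by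
        rw [← lintegral_indicator measurableSet_Ioo]
        refine lintegral_congr fun x => ?_
        by_cases hx : x ∈ Ioo (0 : ℝ) 1
        · rw [indicator_of_mem hx]
        · rw [indicator_of_notMem hx]
          refine (lintegral_congr fun c => ?_).trans lintegral_zero
          rw [hG]
          apply indicator_of_notMem
          rw [mem_interior_simplexSet]
          rintro ⟨h0, h1⟩
          have hs : ∑ i, (Fin.cons (x - ∑ j, c j) c : Fin (d + 1) → ℝ) i = x := by
            simp [Fin.sum_univ_succ]
          rw [hs] at h1
          refine hx ⟨?_, h1⟩
          rw [← hs]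
          exact Finset.sum_pos (fun i _ => h0 i) ⟨0, Finset.mem_univ _⟩
    _ = ∫⁻ x in Ioo (0 : ℝ) 1, ∫⁻ b in interior (simplexSet d),
          ENNReal.ofReal (x ^ d) * g (pMap d (x, b)) := by
        refine setLIntegral_congr_fun measurableSet_Ioo fun x hx => ?_
        have hx0 : x ≠ 0 := hx.1.ne'
        have hxd : 0 < x ^ d := pow_pos hx.1 d
        have hmap := Measure.map_addHaar_smul (volume : Measure (Fin d → ℝ)) hx0
        have hH : Measurable fun c : Fin d → ℝ => G (Fin.cons (x - ∑ j, c j) c) :=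
          hm3.comp (measurable_prodMk_left (x := x))
        have h1 : ∫⁻ b : Fin d → ℝ, G (pMap d (x, b)) =
            ENNReal.ofReal ((x ^ d)⁻¹) * ∫⁻ c : Fin d → ℝ, G (Fin.cons (x - ∑ j, c j) c) := by
          have h2 := lintegral_map (μ := (volume : Measure (Fin d → ℝ))) hH
            (measurable_const_smul x)
          rw [hmap, lintegral_smul_measure, Module.finrank_fin_fun, abs_of_pos (inv_pos.2 hxd)] at h2
          rw [smul_eq_mul] at h2
          rw [h2]
          rfl
        have h3 : ∫⁻ b in interior (simplexSet d), ENNReal.ofReal (x ^ d) * g (pMap d (x, b)) =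
            ENNReal.ofReal (x ^ d) * ∫⁻ b : Fin d → ℝ, G (pMap d (x, b)) := by
          rw [← lintegral_indicator isOpen_interior.measurableSet, ← lintegral_const_mul]
          · refine lintegral_congr fun b => ?_
            by_cases hb : b ∈ interior (simplexSet d)
            · rw [indicator_of_mem hb, hG, indicator_of_mem ((pMap_mem_interior_iff hx).2 hb)]
            · rw [indicator_of_notMem hb, hG,
                indicator_of_notMem (fun h => hb ((pMap_mem_interior_iff hx).1 h)), mul_zero]
          · exact hGm.comp ((continuous_pMap d).measurable.comp measurable_prodMk_left)
        rw [h3, h1, ← mul_assoc, ← ENNReal.ofReal_mul hxd.le, mul_inv_cancel₀ hxd.ne']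
        simp
    _ = _ := by
        unfold cylMeasure
        rw [lintegral_prod]
        apply Measurable.aemeasurable
        have := hg.comp (continuous_pMap d).measurable
        exact (ENNReal.measurable_ofReal.comp (by fun_prop)).mul this

lemma simplex_measure_eq (d : ℕ) : volume.restrict (interior (simplexSet (d + 1))) =
    Measure.map (pMap d) ((cylMeasure d).withDensity fun z => ENNReal.ofReal (z.1 ^ d)) := by
  have hp := (continuous_pMap d).measurable
  refine Measure.ext_of_lintegral _ fun g hg => ?_
  rw [lintegral_simplex hg, lintegral_map hg hp, lintegral_withDensity_eq_lintegral_mul]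
  · rfl
  · fun_prop
  · exact hg.comp hp

lemma ae_cyl {d : ℕ} : ∀ᵐ z ∂(cylMeasure d), z ∈ Ioo (0 : ℝ) 1 ×ˢ interior (simplexSet d) := by
  rw [cylMeasure_eq]
  exact ae_restrict_mem (measurableSet_cyl d)

lemma toReal_ae {d : ℕ} {f : ℝ × (Fin d → ℝ) → ℝ} :
    (fun z => (ENNReal.ofReal (z.1 ^ d)).toReal • f z) =ᵐ[cylMeasure d]
      fun z => z.1 ^ d * f z := by
  filter_upwards [ae_cyl] with z hz
  rw [ENNReal.toReal_ofReal (pow_nonneg hz.1.1.le d), smul_eq_mul]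

lemma integrableOn_simplex_iff {d : ℕ} {f : (Fin (d + 1) → ℝ) → ℝ}
    (hf : ContinuousOn f (interior (simplexSet (d + 1)))) :
    IntegrableOn f (interior (simplexSet (d + 1))) ↔
      Integrable (fun z => z.1 ^ d * f (pMap d z)) (cylMeasure d) := by
  have hm : AEStronglyMeasurable f (volume.restrict (interior (simplexSet (d + 1)))) :=
    hf.aestronglyMeasurable isOpen_interior.measurableSet
  unfold IntegrableOn
  rw [simplex_measure_eq] at hm ⊢
  rw [integrable_map_measure hm (continuous_pMap d).measurable.aemeasurable,
    integrable_withDensity_iff_integrable_smul' (by fun_prop) (by simp)]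
  exact integrable_congr toReal_ae

lemma integral_simplex {d : ℕ} {f : (Fin (d + 1) → ℝ) → ℝ}
    (hf : ContinuousOn f (interior (simplexSet (d + 1)))) :
    ∫ a in interior (simplexSet (d + 1)), f a =
      ∫ z, z.1 ^ d * f (pMap d z) ∂(cylMeasure d) := by
  have hm : AEStronglyMeasurable f (volume.restrict (interior (simplexSet (d + 1)))) :=
    hf.aestronglyMeasurable isOpen_interior.measurableSet
  rw [simplex_measure_eq] at hm ⊢
  rw [integral_map (continuous_pMap d).measurable.aemeasurable hm,
    integral_withDensity_eq_integral_toReal_smul (by fun_prop) (by simp)]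
  exact integral_congr_ae toReal_ae

/-! ### The cone: faces, continuity, derivative -/

lemma cone_comp_face_zero {d N : ℕ} (σ : (Fin d → ℝ) → (Fin N → ℝ)) :
    cone σ ∘ faceMap d 0 = σ := by
  funext b
  have h : ∑ i, (Fin.cons (1 - ∑ j, b j) b : Fin (d + 1) → ℝ) i = 1 := by
    simp [Fin.sum_univ_succ]
  simp only [Function.comp_apply, faceMap, dif_pos, cone, h, one_ne_zero, if_false, one_smul,
    Fin.cons_succ, div_one]

lemma cone_comp_face_succ {d N : ℕ} (σ : (Fin (d + 1) → ℝ) → (Fin N → ℝ)) (i : Fin (d + 2)) :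
    cone σ ∘ faceMap (d + 1) i.succ = cone (σ ∘ faceMap d i) := by
  funext b
  have hsum : ∑ j, faceMap (d + 1) i.succ b j = ∑ j, b j := by
    simp only [faceMap, Fin.succ_ne_zero, dif_neg, not_false_eq_true, Fin.pred_succ]
    rw [Fin.sum_univ_succAbove _ i]
    simp
  simp only [Function.comp_apply, cone, hsum]
  split_ifs with h
  · rfl
  · congr 2
    by_cases hi : i = 0
    · subst hi
      funext j
      have hb : faceMap (d + 1) (Fin.succ 0) b j.succ = b j := by
        simp [faceMap]
      rw [hb]
      refine Fin.cases ?_ (fun l => ?_) j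
      · simp only [faceMap, dif_pos, Fin.cons_zero]
        rw [← Finset.sum_div, eq_sub_iff_add_eq, ← add_div, ← Fin.sum_univ_succ, div_self h]
      · simp [faceMap]
    · obtain ⟨l, rfl⟩ := Fin.exists_succ_eq.2 hi
      funext j
      simp only [faceMap, Fin.succ_ne_zero, dif_neg, not_false_eq_true, Fin.pred_succ]
      refine Fin.succAboveCases l ?_ (fun m => ?_) j
      · rw [Fin.insertNth_apply_same, Fin.insertNth_apply_same, zero_div]
      · rw [Fin.insertNth_apply_succAbove, ← Fin.succ_succAbove_succ,
          Fin.insertNth_apply_succAbove]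

/-- sum of coordinates as a continuous linear map -/
def sumL (d : ℕ) : (Fin d → ℝ) →L[ℝ] ℝ := ∑ i, ContinuousLinearMap.proj i

@[simp] lemma sumL_apply {d : ℕ} (v : Fin d → ℝ) : sumL d v = ∑ i, v i := by
  simp [sumL]

/-- tail as a continuous linear map -/
def tailL (d : ℕ) : (Fin (d + 1) → ℝ) →L[ℝ] (Fin d → ℝ) :=
  ContinuousLinearMap.pi fun j => ContinuousLinearMap.proj j.succ

@[simp] lemma tailL_apply {d : ℕ} (v : Fin (d + 1) → ℝ) (j : Fin d) : tailL d v j = v j.succ := rfl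

lemma cone_eq_of_ne {d N : ℕ} (σ : (Fin d → ℝ) → (Fin N → ℝ)) {a : Fin (d + 1) → ℝ}
    (h : sumL _ a ≠ 0) : cone σ a = sumL _ a • σ ((sumL _ a)⁻¹ • tailL d a) := by
  rw [sumL_apply] at h
  simp only [cone, if_neg h, sumL_apply]
  congr 2
  funext j
  simp [div_eq_inv_mul]

lemma eventually_ne {d : ℕ} {a : Fin (d + 1) → ℝ} (h : sumL _ a ≠ 0) :
    ∀ᶠ x in nhds a, sumL (d + 1) x ≠ 0 :=
  (sumL (d + 1)).continuous.continuousAt.eventually_ne h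

lemma normalize_mem {d : ℕ} {a : Fin (d + 1) → ℝ} (ha : a ∈ simplexSet (d + 1))
    (h : sumL _ a ≠ 0) : (sumL _ a)⁻¹ • tailL d a ∈ simplexSet d := by
  have hA0 : 0 < sumL _ a := lt_of_le_of_ne
    (by rw [sumL_apply]; exact Finset.sum_nonneg fun i _ => ha.1 i) (Ne.symm h)
  refine ⟨fun i => ?_, ?_⟩
  · simp only [Pi.smul_apply, smul_eq_mul, tailL_apply]
    exact mul_nonneg (inv_nonneg.2 hA0.le) (ha.1 _)
  · simp only [Pi.smul_apply, smul_eq_mul, tailL_apply, ← Finset.mul_sum]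
    rw [inv_mul_le_one₀ hA0, sumL_apply, Fin.sum_univ_succ]
    linarith [ha.1 0]

lemma normalize_mem_interior {d : ℕ} {a : Fin (d + 1) → ℝ}
    (ha : a ∈ interior (simplexSet (d + 1))) :
    0 < sumL _ a ∧ (sumL _ a)⁻¹ • tailL d a ∈ interior (simplexSet d) := by
  rw [mem_interior_simplexSet] at ha ⊢
  have hA0 : 0 < sumL _ a := by
    rw [sumL_apply]; exact Finset.sum_pos (fun i _ => ha.1 i) ⟨0, Finset.mem_univ _⟩
  refine ⟨hA0, fun i => ?_, ?_⟩
  · simp only [Pi.smul_apply, smul_eq_mul, tailL_apply]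
    exact mul_pos (inv_pos.2 hA0) (ha.1 _)
  · simp only [Pi.smul_apply, smul_eq_mul, tailL_apply, ← Finset.mul_sum]
    rw [inv_mul_lt_one₀ hA0, sumL_apply, Fin.sum_univ_succ]
    linarith [ha.1 0]

lemma continuousOn_cone {d N : ℕ} {σ : (Fin d → ℝ) → (Fin N → ℝ)}
    (h : ContinuousOn σ (simplexSet d)) : ContinuousOn (cone σ) (simplexSet (d + 1)) := by
  intro a ha
  by_cases hA : sumL _ a = 0
  · have hcone : cone σ a = 0 := by
      rw [sumL_apply] at hA
      simp [cone, hA]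
    obtain ⟨C, hC⟩ := (isCompact_simplexSet d).exists_bound_of_continuousOn h
    unfold ContinuousWithinAt
    rw [hcone]
    apply squeeze_zero_norm' (a := fun x => sumL (d + 1) x * C)
    · filter_upwards [self_mem_nhdsWithin] with x hx
      by_cases hx0 : sumL _ x = 0
      · have : cone σ x = 0 := by
          rw [sumL_apply] at hx0
          simp [cone, hx0]
        simp [this, hx0]
      · rw [cone_eq_of_ne σ hx0, norm_smul]
        have hA0 : 0 ≤ sumL _ x := by
          rw [sumL_apply]; exact Finset.sum_nonneg fun i _ => hx.1 i
        rw [Real.norm_of_nonneg hA0]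
        exact mul_le_mul_of_nonneg_left (hC _ (normalize_mem hx hx0)) hA0
    · have : Filter.Tendsto (fun x => sumL (d + 1) x * C) (nhds a) (nhds (sumL (d + 1) a * C)) :=
        ((sumL (d + 1)).continuous.mul continuous_const).tendsto a
      rw [hA, zero_mul] at this
      exact this.mono_left nhdsWithin_le_nhds
  · have h1 : ContinuousWithinAt
        (fun x => sumL (d + 1) x • σ ((sumL (d + 1) x)⁻¹ • tailL d x)) (simplexSet (d + 1)) a := by
      refine (sumL (d + 1)).continuous.continuousWithinAt.smul ?_
      have h2 : ContinuousWithinAt (fun x => (sumL (d + 1) x)⁻¹ • tailL d x)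
          (simplexSet (d + 1) ∩ {x | sumL (d + 1) x ≠ 0}) a :=
        ((sumL (d + 1)).continuous.continuousWithinAt.inv₀ hA).smul
          (tailL d).continuous.continuousWithinAt
      have h3 : ContinuousWithinAt (fun x => σ ((sumL (d + 1) x)⁻¹ • tailL d x))
          (simplexSet (d + 1) ∩ {x | sumL (d + 1) x ≠ 0}) a :=
        ContinuousWithinAt.comp (f := fun x => (sumL (d + 1) x)⁻¹ • tailL d x) (g := σ)
          (h _ (normalize_mem ha hA)) h2 (fun x hx => normalize_mem hx.1 hx.2)
      exact h3.mono_of_mem_nhdsWithin (Filter.inter_mem self_mem_nhdsWithin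
        (nhdsWithin_le_nhds (eventually_ne hA)))
    refine h1.congr_of_eventuallyEq ?_ (cone_eq_of_ne σ hA)
    filter_upwards [nhdsWithin_le_nhds (eventually_ne hA)] with x hx
    exact cone_eq_of_ne σ hx

lemma contDiffOn_cone {d N : ℕ} {σ : (Fin d → ℝ) → (Fin N → ℝ)}
    (h : ContDiffOn ℝ 1 σ (interior (simplexSet d))) :
    ContDiffOn ℝ 1 (cone σ) (interior (simplexSet (d + 1))) := by
  have h1 : ContDiffOn ℝ 1
      (fun x => sumL (d + 1) x • σ ((sumL (d + 1) x)⁻¹ • tailL d x))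
      (interior (simplexSet (d + 1))) := by
    refine (sumL (d + 1)).contDiff.contDiffOn.smul (h.comp ?_ ?_)
    · exact ((sumL (d + 1)).contDiff.contDiffOn.inv
        (fun x hx => (normalize_mem_interior hx).1.ne')).smul (tailL d).contDiff.contDiffOn
    · exact fun x hx => (normalize_mem_interior hx).2
  exact h1.congr fun x hx => cone_eq_of_ne σ (normalize_mem_interior hx).1.ne'

lemma c1_cone {N : ℕ} : ∀ (d : ℕ) (σ : (Fin d → ℝ) → (Fin N → ℝ)),
    C1OnOpenFaces N d σ → C1OnOpenFaces N (d + 1) (cone σ)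
  | 0, σ, h => by
    refine ⟨continuousOn_cone h.1, contDiffOn_cone h.2, fun i => ⟨?_, ?_⟩⟩
    · exact continuous_of_discreteTopology.continuousOn
    · intro x _
      have : cone σ ∘ faceMap 0 i = fun _ => (cone σ ∘ faceMap 0 i) x := by
        funext y; rw [Subsingleton.elim y x]
      rw [this]; exact contDiffWithinAt_const
  | d + 1, σ, h => by
    refine ⟨continuousOn_cone h.1, contDiffOn_cone h.2.1, fun i => ?_⟩
    refine Fin.cases ?_ (fun j => ?_) i
    · rw [cone_comp_face_zero]; exact h
    · rw [cone_comp_face_succ]; exact c1_cone d _ (h.2.2 j)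

lemma c1_left {N d : ℕ} {σ : (Fin d → ℝ) → (Fin N → ℝ)} (h : C1OnOpenFaces N d σ) :
    ContinuousOn σ (simplexSet d) ∧ ContDiffOn ℝ 1 σ (interior (simplexSet d)) := by
  cases d with
  | zero => exact h
  | succ d => exact ⟨h.1, h.2.1⟩

lemma sumL_pMap {d : ℕ} (z : ℝ × (Fin d → ℝ)) : sumL _ (pMap d z) = z.1 := by
  rw [sumL_apply, sum_pMap]

lemma tailL_pMap {d : ℕ} (z : ℝ × (Fin d → ℝ)) : tailL d (pMap d z) = z.1 • z.2 := by
  funext j; simp [pMap]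

lemma hasFDerivAt_cone {d N : ℕ} {σ : (Fin d → ℝ) → (Fin N → ℝ)} {s : ℝ} {b : Fin d → ℝ}
    (hs : s ≠ 0) {D : (Fin d → ℝ) →L[ℝ] (Fin N → ℝ)} (hD : HasFDerivAt σ D b)
    (v : Fin (d + 1) → ℝ) :
    fderiv ℝ (cone σ) (pMap d (s, b)) v = (∑ i, v i) • (σ b - D b) + D (tailL d v) := by
  set a := pMap d (s, b) with ha
  have hsum : sumL _ a = s := sumL_pMap _
  have htail : tailL d a = s • b := tailL_pMap _
  have hA : sumL _ a ≠ 0 := by rwa [hsum]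
  have hnorm : (sumL _ a)⁻¹ • tailL d a = b := by
    rw [hsum, htail, smul_smul, inv_mul_cancel₀ hs, one_smul]
  have hinv : HasFDerivAt (fun x => (sumL (d + 1) x)⁻¹) _ a :=
    (hasFDerivAt_inv hA).comp a (sumL (d + 1)).hasFDerivAt
  have h1 := hinv.smul (tailL d).hasFDerivAt
  rw [← hnorm] at hD
  have h2 := (sumL (d + 1)).hasFDerivAt (x := a) |>.smul (hD.comp a h1)
  have h3 : HasFDerivAt (cone σ) _ a := h2.congr_of_eventuallyEq (by
    filter_upwards [eventually_ne hA] with x hx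
    exact cone_eq_of_ne σ hx)
  rw [h3.fderiv]
  have hσ : (σ ∘ ((fun x => ((sumL (d + 1)) x)⁻¹) • ⇑(tailL d))) a = σ b := congrArg σ hnorm
  rw [hσ, hsum, htail]
  simp only [_root_.add_apply, _root_.smul_apply,
    ContinuousLinearMap.comp_apply, ContinuousLinearMap.smulRight_apply,
    ContinuousLinearMap.toSpanSingleton_apply, sumL_apply, map_add, map_smul, smul_eq_mul]
  funext l
  simp only [Pi.add_apply, Pi.smul_apply, Pi.sub_apply, smul_eq_mul]
  field_simp
  ring

lemma isAlternatingForm_smul {N k : ℕ} {A : Form N k} (h : IsAlternatingForm A) (c : ℝ) :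
    IsAlternatingForm (c • A) := fun v i j hv hij => by
  simp [h v i j hv hij]

lemma isAlternatingForm_add {N k : ℕ} {A B : Form N k} (h : IsAlternatingForm A)
    (h' : IsAlternatingForm B) : IsAlternatingForm (A + B) := fun v i j hv hij => by
  simp [h v i j hv hij, h' v i j hv hij]

/-- contraction of a form with a vector -/
def contract {N k : ℕ} (A : Form N (k + 1)) (y : Fin N → ℝ) : Form N k :=
  continuousMultilinearCurryLeftEquiv ℝ (fun _ : Fin (k + 1) => (Fin N → ℝ)) ℝ A y

lemma contract_apply {N k : ℕ} (A : Form N (k + 1)) (y : Fin N → ℝ) (v : Fin k → (Fin N → ℝ)) :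
    contract A y v = A (Fin.cons y v) := rfl

lemma isAlternatingForm_contract {N k : ℕ} {A : Form N (k + 1)} (h : IsAlternatingForm A)
    (y : Fin N → ℝ) : IsAlternatingForm (contract A y) := fun v i j hv hij => by
  rw [contract_apply]
  refine h _ i.succ j.succ ?_ (fun h => hij (Fin.succ_injective _ h))
  simpa using hv

lemma alternating_shear {N k : ℕ} {A : Form N (k + 1)} (h : IsAlternatingForm A)
    (y : Fin N → ℝ) (v : Fin k → (Fin N → ℝ)) (c : Fin k → ℝ) :
    A (Fin.cons (y - ∑ j, c j • v j) (fun j => (y - ∑ j, c j • v j) + v j)) =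
      A (Fin.cons y v) := by
  set w := y - ∑ j, c j • v j with hw
  have h1 : A (Fin.cons w (fun j => w + v j)) = A (Fin.cons w v) := by
    rw [← contract_apply, ← contract_apply]
    have := (contract A w).toMultilinearMap.map_add_univ (fun _ => w) v
    have h2 : (contract A w) ((fun _ => w) + v) =
      ∑ s : Finset (Fin k), contract A w (s.piecewise (fun _ => w) v) := this
    have h3 : (fun j => w + v j) = ((fun _ => w) + v) := rfl
    rw [h3, h2, Finset.sum_eq_single ∅]
    · simp
    · intro s _ hs
      obtain ⟨i, hi⟩ := Finset.nonempty_iff_ne_empty.2 hs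
      rw [contract_apply]
      refine h _ 0 i.succ ?_ (Fin.succ_ne_zero i).symm
      simp [hi]
    · simp
  rw [h1]
  let L := continuousMultilinearCurryLeftEquiv ℝ (fun _ : Fin (k + 1) => (Fin N → ℝ)) ℝ A
  have h4 : ∀ y, A (Fin.cons y v) = L y v := fun y => rfl
  have h5 : ∀ j, L (v j) v = 0 := fun j =>
    h _ 0 j.succ (by simp) (Fin.succ_ne_zero j).symm
  rw [h4, h4, hw, map_sub, map_sum]
  simp [h5]

/-- exterior derivative from a derivative -/
def dForm {N k : ℕ} (D : (Fin N → ℝ) →L[ℝ] Form N k) : Form N (k + 1) :=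
  ∑ i : Fin (k + 1), (-1 : ℝ) ^ (i : ℕ) •
    ContinuousMultilinearMap.domDomCongrₗᵢ ℝ (Fin N → ℝ) ℝ (Fin.cycleRange i).symm
      ((continuousMultilinearCurryLeftEquiv ℝ (fun _ : Fin (k + 1) => (Fin N → ℝ)) ℝ).symm D)

lemma dForm_apply {N k : ℕ} (D : (Fin N → ℝ) →L[ℝ] Form N k) (v : Fin (k + 1) → (Fin N → ℝ)) :
    dForm D v = ∑ i : Fin (k + 1), (-1 : ℝ) ^ (i : ℕ) * D (v i) (fun j => v (i.succAbove j)) := by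
  unfold dForm
  rw [_root_.sum_apply]
  refine Finset.sum_congr rfl fun i _ => ?_
  rw [_root_.smul_apply, smul_eq_mul]
  congr 1
  show D (v ((Fin.cycleRange i).symm 0)) (fun j => v ((Fin.cycleRange i).symm j.succ)) = _
  simp only [Fin.cycleRange_symm_zero, Fin.cycleRange_symm_succ]

lemma continuous_dForm {N k : ℕ} :
    Continuous (dForm : ((Fin N → ℝ) →L[ℝ] Form N k) → Form N (k + 1)) := by
  unfold dForm
  refine continuous_finsetSum Finset.univ fun i _ => ?_
  refine Continuous.const_smul ?_ ((-1 : ℝ) ^ (i : ℕ))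
  exact (ContinuousMultilinearMap.domDomCongrₗᵢ ℝ (Fin N → ℝ) ℝ
    (Fin.cycleRange i).symm).continuous.comp
      (continuousMultilinearCurryLeftEquiv ℝ
        (fun _ : Fin (k + 1) => (Fin N → ℝ)) ℝ).symm.continuous

/-- an alternating form as an alternating map -/
def toAlt {N k : ℕ} (A : Form N k) (h : IsAlternatingForm A) :
    (Fin N → ℝ) [⋀^Fin k]→ₗ[ℝ] ℝ :=
  { A.toMultilinearMap with map_eq_zero_of_eq' := h }

lemma toAlt_apply {N k : ℕ} (A : Form N k) (h : IsAlternatingForm A) (v : Fin k → (Fin N → ℝ)) :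
    toAlt A h v = A v := rfl

lemma isAlternatingForm_dForm {N k : ℕ} {D : (Fin N → ℝ) →L[ℝ] Form N k}
    (h : ∀ u, IsAlternatingForm (D u)) : IsAlternatingForm (dForm D) := by
  let f : (Fin N → ℝ) →ₗ[ℝ] ((Fin N → ℝ) [⋀^Fin k]→ₗ[ℝ] ℝ) :=
    { toFun := fun u => toAlt (D u) (h u)
      map_add' := fun u u' => by
        ext v; simp [toAlt_apply]
      map_smul' := fun c u => by
        ext v; simp [toAlt_apply] }
  have key : ∀ v, dForm D v = AlternatingMap.alternatizeUncurryFin f v := fun v => by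
    rw [dForm_apply, AlternatingMap.alternatizeUncurryFin_apply]
    refine Finset.sum_congr rfl fun i _ => ?_
    simp [f, toAlt_apply]
    rfl
  intro v i j hv hij
  rw [key]
  exact AlternatingMap.map_eq_zero_of_eq _ _ hv hij

lemma alternating_cycle {N k : ℕ} {A : Form N (k + 1)} (h : IsAlternatingForm A)
    (v : Fin (k + 1) → (Fin N → ℝ)) (i : Fin (k + 1)) :
    (-1 : ℝ) ^ (i : ℕ) * A (Fin.cons (v i) (fun j => v (i.succAbove j))) = A v := by
  have h1 := (toAlt A h).map_perm v (Fin.cycleRange i).symm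
  have h2 : v ∘ (Fin.cycleRange i).symm = Fin.cons (v i) (fun j => v (i.succAbove j)) := by
    funext j
    refine Fin.cases ?_ (fun j => ?_) j
    · simp
    · simp
  rw [h2, toAlt_apply, toAlt_apply] at h1
  rw [h1]
  simp [Fin.sign_cycleRange, Units.smul_def, ← mul_assoc, ← mul_pow]

/-! ### Densities -/

/-- the tuple of partial derivatives -/
def tup {d N : ℕ} (σ : (Fin d → ℝ) → (Fin N → ℝ)) (x : Fin d → ℝ) : Fin d → (Fin N → ℝ) :=
  fun j => fderiv ℝ σ x (Pi.single j 1)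

lemma pullbackDensity_eq {d N : ℕ} (σ : (Fin d → ℝ) → (Fin N → ℝ))
    (ω : (Fin N → ℝ) → Form N d) (x : Fin d → ℝ) :
    pullbackDensity σ ω x = ω (σ x) (tup σ x) := rfl

lemma pullbackDensityD_eq {d N : ℕ} (σ : (Fin (d + 1) → ℝ) → (Fin N → ℝ))
    (ω : (Fin N → ℝ) → Form N d) :
    pullbackDensityD σ ω = pullbackDensity σ (fun y => dForm (fderiv ℝ ω y)) := by
  funext x
  rw [pullbackDensity_eq, dForm_apply]
  rfl

lemma cone_tuple {k N : ℕ} {σ : (Fin k → ℝ) → (Fin N → ℝ)} {s : ℝ} {b : Fin k → ℝ}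
    (hs : s ≠ 0) (hD : DifferentiableAt ℝ σ b) {A : Form N (k + 1)} (hA : IsAlternatingForm A) :
    A (tup (cone σ) (pMap k (s, b))) = contract A (σ b) (tup σ b) := by
  have hb : fderiv ℝ σ b b = ∑ j, b j • tup σ b j := by
    have h2 : ∀ D : (Fin k → ℝ) →L[ℝ] (Fin N → ℝ), D b = ∑ j, b j • D (Pi.single j 1) := by
      intro D
      conv_lhs => rw [pi_eq_sum_univ' b]
      rw [map_sum]
      exact Finset.sum_congr rfl fun j _ => map_smul _ _ _
    exact h2 _
  rw [contract_apply, ← alternating_shear hA (σ b) (tup σ b) b]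
  congr 1
  funext j
  unfold tup
  rw [hasFDerivAt_cone hs hD.hasFDerivAt]
  refine Fin.cases ?_ (fun j => ?_) j
  · have : tailL k (Pi.single 0 1) = 0 := by
      funext l; simp
    rw [this, hb]
    simp [tup]
  · have : tailL k (Pi.single j.succ 1) = Pi.single j 1 := by
      funext l; simp [Pi.single_apply]
    rw [this, hb]
    simp [tup]

instance finiteDimensional_form (N k : ℕ) : FiniteDimensional ℝ (Form N k) :=
  FiniteDimensional.of_injective
    (ContinuousMultilinearMap.toMultilinearMapLinear :
      Form N k →ₗ[ℝ] MultilinearMap ℝ (fun _ : Fin k => (Fin N → ℝ)) ℝ)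
    ContinuousMultilinearMap.toMultilinearMap_injective

/-- The submodule of alternating forms. -/
def altSub (N k : ℕ) : Submodule ℝ (Form N k) where
  carrier := {A | IsAlternatingForm A}
  add_mem' := isAlternatingForm_add
  zero_mem' := fun v i j _ _ => by simp
  smul_mem' := fun c _ h => isAlternatingForm_smul h c

lemma exists_coords_aux {W : Type*} [NormedAddCommGroup W] [NormedSpace ℝ W]
    [FiniteDimensional ℝ W] (p : Submodule ℝ W) :
    ∃ (n : ℕ) (B : Fin n → W) (g : Fin n → W →L[ℝ] ℝ),
    (∀ i, B i ∈ p) ∧ ∀ A ∈ p, A = ∑ i, g i A • B i := by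
  let b := Module.finBasis ℝ p
  have hg : ∀ i, ∃ g : W →ₗ[ℝ] ℝ, g ∘ₗ p.subtype = b.coord i :=
    fun i => LinearMap.exists_extend _
  choose g hg using hg
  refine ⟨_, fun i => (b i : W), fun i => (g i).toContinuousLinearMap,
    fun i => (b i).2, fun A hA => ?_⟩
  have h1 := b.sum_repr ⟨A, hA⟩
  have h2 : ∑ i, (b.repr ⟨A, hA⟩) i • (b i : W) = A := by
    have := congrArg p.subtype h1
    rw [map_sum] at this
    simpa only [map_smul, Submodule.subtype_apply] using this
  have h3 : ∀ i, g i A = b.repr ⟨A, hA⟩ i := fun i => LinearMap.congr_fun (hg i) ⟨A, hA⟩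
  rw [← Finset.sum_congr rfl fun i _ => ?_]
  · exact h2.symm
  · simp [h3]

lemma exists_coords (N k : ℕ) : ∃ (n : ℕ) (B : Fin n → Form N k) (g : Fin n → Form N k →L[ℝ] ℝ),
    (∀ i, IsAlternatingForm (B i)) ∧
    ∀ A, IsAlternatingForm A → A = ∑ i, g i A • B i :=
  exists_coords_aux (altSub N k)

lemma continuousOn_tup {k N : ℕ} {σ : (Fin k → ℝ) → (Fin N → ℝ)}
    (h1 : ContDiffOn ℝ 1 σ (interior (simplexSet k))) :
    ContinuousOn (tup σ) (interior (simplexSet k)) := by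
  have := h1.continuousOn_fderiv_of_isOpen isOpen_interior le_rfl
  exact continuousOn_pi.2 fun j => this.clm_apply continuousOn_const

lemma continuousOn_pullbackDensity {k N : ℕ} {σ : (Fin k → ℝ) → (Fin N → ℝ)}
    (h0 : ContinuousOn σ (simplexSet k))
    (h1 : ContDiffOn ℝ 1 σ (interior (simplexSet k))) {ω : (Fin N → ℝ) → Form N k}
    (hω : ContinuousOn ω (σ '' simplexSet k)) :
    ContinuousOn (pullbackDensity σ ω) (interior (simplexSet k)) := by
  have h2 : ContinuousOn (fun x => ω (σ x)) (interior (simplexSet k)) :=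
    hω.comp (h0.mono interior_subset) fun x hx => mem_image_of_mem _ (interior_subset hx)
  exact continuous_eval.comp_continuousOn (h2.prodMk (continuousOn_tup h1))

/-- Key lemma: integrability of parametrised densities. -/
lemma integrable_param {k N : ℕ} {σ : (Fin k → ℝ) → (Fin N → ℝ)}
    (hfv : FiniteVolume σ) {E : ℝ × (Fin k → ℝ) → Form N k}
    (hE : ContinuousOn E (Icc (0 : ℝ) 1 ×ˢ simplexSet k))
    (hA : ∀ z ∈ Icc (0 : ℝ) 1 ×ˢ simplexSet k, IsAlternatingForm (E z)) :
    Integrable (fun z => E z (tup σ z.2)) (cylMeasure k) := by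
  obtain ⟨n, B, g, hB, hg⟩ := exists_coords N k
  have hsub : Ioo (0 : ℝ) 1 ×ˢ interior (simplexSet k) ⊆ Icc (0 : ℝ) 1 ×ˢ simplexSet k :=
    prod_mono Ioo_subset_Icc_self interior_subset
  have hsum : Integrable (fun z => ∑ i, g i (E z) * B i (tup σ z.2)) (cylMeasure k) := by
    refine integrable_finsetSum _ fun i _ => ?_
    have hc : ContinuousOn (fun z => g i (E z)) (Icc (0 : ℝ) 1 ×ˢ simplexSet k) :=
      (g i).continuous.comp_continuousOn hE
    obtain ⟨C, hC⟩ := (isCompact_Icc.prod (isCompact_simplexSet k)).exists_bound_of_continuousOn hc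
    refine Integrable.bdd_mul (c := C) ?_ ?_ ?_
    · have h1 : IntegrableOn (pullbackDensity σ (fun _ => B i)) (interior (simplexSet k)) :=
        hfv _ (fun _ _ => hB i) continuousOn_const
      exact Integrable.comp_snd h1 _
    · rw [cylMeasure_eq]
      exact (hc.mono hsub).aestronglyMeasurable (measurableSet_cyl k)
    · filter_upwards [ae_cyl] with z hz
      exact hC z (hsub hz)
  refine hsum.congr ?_
  filter_upwards [ae_cyl] with z hz
  conv_rhs => rw [hg (E z) (hA z (hsub hz))]
  simp

lemma continuous_contract {N k : ℕ} :
    Continuous (fun p : Form N (k + 1) × (Fin N → ℝ) => contract p.1 p.2) := by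
  unfold contract
  exact ((LinearIsometryEquiv.continuous _).comp continuous_fst).clm_apply continuous_snd

lemma smul_mem_cone_image {k N : ℕ} {σ : (Fin k → ℝ) → (Fin N → ℝ)} {z : ℝ × (Fin k → ℝ)}
    (hz : z ∈ Icc (0 : ℝ) 1 ×ˢ simplexSet k) : z.1 • σ z.2 ∈ cone σ '' simplexSet (k + 1) :=
  ⟨pMap k z, pMap_mem hz.1 hz.2, cone_pMap σ z⟩

lemma continuousOn_cyl {k N : ℕ} {σ : (Fin k → ℝ) → (Fin N → ℝ)}
    (h0 : ContinuousOn σ (simplexSet k)) :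
    ContinuousOn (fun z : ℝ × (Fin k → ℝ) => σ z.2) (Icc (0 : ℝ) 1 ×ˢ simplexSet k) :=
  h0.comp continuousOn_snd fun _ hz => hz.2

lemma cone_density {k N : ℕ} {σ : (Fin k → ℝ) → (Fin N → ℝ)}
    (h0 : ContinuousOn σ (simplexSet k))
    (h1 : ContDiffOn ℝ 1 σ (interior (simplexSet k))) (hfv : FiniteVolume σ)
    {Ω : (Fin N → ℝ) → Form N (k + 1)} (hΩ : ContinuousOn Ω (cone σ '' simplexSet (k + 1)))
    (hA : ∀ y ∈ cone σ '' simplexSet (k + 1), IsAlternatingForm (Ω y)) :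
    IntegrableOn (pullbackDensity (cone σ) Ω) (interior (simplexSet (k + 1))) ∧
    Integrable (fun z => (z.1 ^ k • contract (Ω (z.1 • σ z.2)) (σ z.2)) (tup σ z.2))
      (cylMeasure k) ∧
    ∫ a in interior (simplexSet (k + 1)), pullbackDensity (cone σ) Ω a =
      ∫ z, (z.1 ^ k • contract (Ω (z.1 • σ z.2)) (σ z.2)) (tup σ z.2) ∂(cylMeasure k) := by
  have hc := continuousOn_pullbackDensity (continuousOn_cone h0) (contDiffOn_cone h1) hΩ
  have hσ := continuousOn_cyl h0
  have hint : Integrable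
      (fun z => (z.1 ^ k • contract (Ω (z.1 • σ z.2)) (σ z.2)) (tup σ z.2)) (cylMeasure k) := by
    refine integrable_param hfv (E := fun z => z.1 ^ k • contract (Ω (z.1 • σ z.2)) (σ z.2)) ?_ ?_
    · refine ContinuousOn.smul (continuousOn_fst.pow k) ?_
      refine continuous_contract.comp_continuousOn (ContinuousOn.prodMk ?_ hσ)
      exact hΩ.comp (continuousOn_fst.smul hσ) fun z hz => smul_mem_cone_image hz
    · intro z hz
      exact isAlternatingForm_smul (isAlternatingForm_contract
        (hA _ (smul_mem_cone_image hz)) _) _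
  have hae : (fun z => z.1 ^ k * pullbackDensity (cone σ) Ω (pMap k z)) =ᵐ[cylMeasure k]
      (fun z => (z.1 ^ k • contract (Ω (z.1 • σ z.2)) (σ z.2)) (tup σ z.2)) := by
    filter_upwards [ae_cyl] with z hz
    have hd : DifferentiableAt ℝ σ z.2 :=
      (h1.differentiableOn one_ne_zero).differentiableAt (isOpen_interior.mem_nhds hz.2)
    rw [pullbackDensity_eq, cone_pMap, cone_tuple hz.1.1.ne' hd
      (hA _ (smul_mem_cone_image ⟨Ioo_subset_Icc_self hz.1, interior_subset hz.2⟩))]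
    simp
  refine ⟨(integrableOn_simplex_iff hc).2 (hint.congr hae.symm), hint, ?_⟩
  rw [integral_simplex hc]
  exact integral_congr_ae hae

lemma finiteVolume_cone {k N : ℕ} {σ : (Fin k → ℝ) → (Fin N → ℝ)}
    (h0 : ContinuousOn σ (simplexSet k))
    (h1 : ContDiffOn ℝ 1 σ (interior (simplexSet k))) (hfv : FiniteVolume σ) :
    FiniteVolume (cone σ) :=
  fun _ hA hΩ => (cone_density h0 h1 hfv hΩ hA).1

/-! ### The homotopy formula and the main theorem -/

lemma faceMap_mem {d : ℕ} (i : Fin (d + 2)) {b : Fin d → ℝ} (hb : b ∈ simplexSet d) :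
    faceMap d i b ∈ simplexSet (d + 1) := by
  by_cases hi : i = 0
  · subst hi
    simp only [faceMap, dif_pos]
    refine ⟨fun j => ?_, by simp [Fin.sum_univ_succ]⟩
    refine Fin.cases ?_ (fun l => ?_) j
    · simpa using hb.2
    · simpa using hb.1 l
  · obtain ⟨l, rfl⟩ := Fin.exists_succ_eq.2 hi
    simp only [faceMap, Fin.succ_ne_zero, dif_neg, not_false_eq_true, Fin.pred_succ]
    refine ⟨fun j => ?_, ?_⟩
    · refine Fin.succAboveCases l ?_ (fun m => ?_) j
      · rw [Fin.insertNth_apply_same]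
      · rw [Fin.insertNth_apply_succAbove]; exact hb.1 m
    · rw [Fin.sum_univ_succAbove _ l]
      simpa using hb.2

/-- the homotopy form -/
def kap {N d : ℕ} (ω : (Fin N → ℝ) → Form N (d + 1)) (s : ℝ) (y : Fin N → ℝ) : Form N d :=
  s ^ d • contract (ω (s • y)) y

/-- currying of forms as a continuous linear map -/
def curryL (N d : ℕ) : Form N (d + 1) →L[ℝ] ((Fin N → ℝ) →L[ℝ] Form N d) :=
  (continuousMultilinearCurryLeftEquiv ℝ
    (fun _ : Fin (d + 1) => (Fin N → ℝ)) ℝ).toContinuousLinearEquiv.toContinuousLinearMap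

lemma curryL_hasFDerivAt (N d : ℕ) (A : Form N (d + 1)) :
    HasFDerivAt (fun A : Form N (d + 1) => curryL N d A) (curryL N d) A :=
  ContinuousLinearMap.hasFDerivAt (E := Form N (d + 1)) (F := (Fin N → ℝ) →L[ℝ] Form N d)
    (curryL N d)

lemma curryL_contDiff (N d : ℕ) :
    ContDiff ℝ 1 (fun A : Form N (d + 1) => curryL N d A) :=
  ContinuousLinearMap.contDiff (𝕜 := ℝ) (n := 1) (E := Form N (d + 1))
    (F := (Fin N → ℝ) →L[ℝ] Form N d) (curryL N d)

lemma fderiv_kap {N d : ℕ} {ω : (Fin N → ℝ) → Form N (d + 1)} {s : ℝ} {y : Fin N → ℝ}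
    (h : DifferentiableAt ℝ ω (s • y)) (u : Fin N → ℝ) :
    fderiv ℝ (kap ω s) y u =
      s ^ d • (s • contract (fderiv ℝ ω (s • y) u) y + contract (ω (s • y)) u) := by
  have h1 : HasFDerivAt (fun x : Fin N → ℝ => s • x) (s • ContinuousLinearMap.id ℝ (Fin N → ℝ)) y :=
    (hasFDerivAt_id y).const_smul s
  have h2 : HasFDerivAt (fun x => ω (s • x)) _ y := h.hasFDerivAt.comp y h1
  have h3 : HasFDerivAt (fun x => curryL N d (ω (s • x))) _ y :=
    HasFDerivAt.comp (𝕜 := ℝ) (E := Fin N → ℝ) (F := Form N (d + 1))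
      (G := (Fin N → ℝ) →L[ℝ] Form N d) (g := fun A => curryL N d A) (g' := curryL N d) y
      (curryL_hasFDerivAt N d (ω (s • y))) h2
  have h4 := (h3.clm_apply (hasFDerivAt_id y)).const_smul (s ^ d)
  have h5 : HasFDerivAt (kap ω s) _ y := h4
  rw [h5.fderiv]
  simp only [_root_.smul_apply, _root_.add_apply, ContinuousLinearMap.comp_apply,
    ContinuousLinearMap.flip_apply, ContinuousLinearMap.id_apply, map_smul, id_eq]
  rw [add_comm]
  rfl

lemma contDiffOn_kap {N d : ℕ} {ω : (Fin N → ℝ) → Form N (d + 1)} {V : Set (Fin N → ℝ)}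
    (h : ContDiffOn ℝ 1 ω V) (s : ℝ) : ContDiffOn ℝ 1 (kap ω s) ((fun y => s • y) ⁻¹' V) := by
  have h2 : ContDiffOn ℝ 1 (fun x => ω (s • x)) ((fun y => s • y) ⁻¹' V) :=
    h.comp (contDiff_const_smul s).contDiffOn (fun _ hx => hx)
  have h3 : ContDiffOn ℝ 1 (fun x => curryL N d (ω (s • x))) ((fun y => s • y) ⁻¹' V) :=
    (curryL_contDiff N d).comp_contDiffOn h2
  exact (h3.clm_apply contDiffOn_id).const_smul (s ^ d)

lemma contract_dForm {N d : ℕ} (D : (Fin N → ℝ) →L[ℝ] Form N (d + 1)) (y : Fin N → ℝ)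
    (v : Fin (d + 1) → (Fin N → ℝ)) :
    contract (dForm D) y v = D y v -
      ∑ i : Fin (d + 1), (-1 : ℝ) ^ (i : ℕ) *
        contract (D (v i)) y (fun j => v (i.succAbove j)) := by
  rw [contract_apply, dForm_apply, Fin.sum_univ_succ, sub_eq_add_neg, ← Finset.sum_neg_distrib]
  congr 1
  · simp
  · refine Finset.sum_congr rfl fun i _ => ?_
    rw [contract_apply]
    have : (fun j => (Fin.cons y v : Fin (d + 2) → (Fin N → ℝ)) (i.succ.succAbove j)) =
        Fin.cons y (fun j => v (i.succAbove j)) := by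
      funext j
      refine Fin.cases ?_ (fun l => ?_) j
      · simp
      · simp
    rw [this]
    simp [pow_succ]

/-- Cartan's formula for the radial homotopy. -/
lemma cartan {N d : ℕ} {ω : (Fin N → ℝ) → Form N (d + 1)} {s : ℝ} {y : Fin N → ℝ}
    (h : DifferentiableAt ℝ ω (s • y)) (hA : IsAlternatingForm (ω (s • y)))
    (v : Fin (d + 1) → (Fin N → ℝ)) :
    (s ^ (d + 1) • contract (dForm (fderiv ℝ ω (s • y))) y) v =
      (((d + 1 : ℝ) * s ^ d) • ω (s • y) + s ^ (d + 1) • fderiv ℝ ω (s • y) y) v -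
        dForm (fderiv ℝ (kap ω s) y) v := by
  have h1 : dForm (fderiv ℝ (kap ω s) y) v =
      s ^ (d + 1) * ∑ i : Fin (d + 1), (-1 : ℝ) ^ (i : ℕ) *
        contract (fderiv ℝ ω (s • y) (v i)) y (fun j => v (i.succAbove j)) +
      s ^ d * ((d + 1 : ℝ) * ω (s • y) v) := by
    have h2 : (d + 1 : ℝ) * ω (s • y) v = ∑ i : Fin (d + 1), (-1 : ℝ) ^ (i : ℕ) *
        contract (ω (s • y)) (v i) (fun j => v (i.succAbove j)) := by
      simp only [contract_apply, alternating_cycle hA]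
      simp
    rw [h2, dForm_apply, Finset.mul_sum, Finset.mul_sum, ← Finset.sum_add_distrib]
    refine Finset.sum_congr rfl fun i _ => ?_
    rw [fderiv_kap h]
    simp only [_root_.smul_apply, _root_.add_apply, smul_eq_mul]
    ring
  rw [h1]
  simp only [_root_.smul_apply, _root_.add_apply, smul_eq_mul, contract_dForm]
  ring

lemma alternating_fderiv {N k : ℕ} {ω : (Fin N → ℝ) → Form N k} {V : Set (Fin N → ℝ)}
    (hV : IsOpen V) (hA : ∀ y ∈ V, IsAlternatingForm (ω y)) {y : Fin N → ℝ} (hy : y ∈ V)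
    (h : DifferentiableAt ℝ ω y) (u : Fin N → ℝ) : IsAlternatingForm (fderiv ℝ ω y u) := by
  intro v i j hv hij
  let ev := ContinuousMultilinearMap.apply ℝ (fun _ : Fin k => (Fin N → ℝ)) ℝ v
  have h1 : HasFDerivAt (fun x => ev (ω x)) (ev.comp (fderiv ℝ ω y)) y :=
    ev.hasFDerivAt.comp y h.hasFDerivAt
  have h2 : HasFDerivAt (fun x => ev (ω x)) (0 : (Fin N → ℝ) →L[ℝ] ℝ) y := by
    refine (hasFDerivAt_const (0 : ℝ) y).congr_of_eventuallyEq ?_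
    filter_upwards [hV.mem_nhds hy] with x hx
    exact hA x hx v i j hv hij
  exact congrArg (fun T : (Fin N → ℝ) →L[ℝ] ℝ => T u) (h1.unique h2)

lemma radial_ftc {N d : ℕ} {ω : (Fin N → ℝ) → Form N (d + 1)} {V : Set (Fin N → ℝ)}
    (hV : IsOpen V) (hω : ContDiffOn ℝ 1 ω V) {y : Fin N → ℝ}
    (hy : ∀ s ∈ Icc (0 : ℝ) 1, s • y ∈ V) (v : Fin (d + 1) → (Fin N → ℝ)) :
    ∫ s in Ioo (0 : ℝ) 1,
      (((d + 1 : ℝ) * s ^ d) • ω (s • y) + s ^ (d + 1) • fderiv ℝ ω (s • y) y) v = ω y v := by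
  let ev := ContinuousMultilinearMap.apply ℝ (fun _ : Fin (d + 1) => (Fin N → ℝ)) ℝ v
  have hderiv : ∀ s ∈ uIcc (0 : ℝ) 1, HasDerivAt (fun s : ℝ => s ^ (d + 1) * ev (ω (s • y)))
      ((((d + 1 : ℝ) * s ^ d) • ω (s • y) + s ^ (d + 1) • fderiv ℝ ω (s • y) y) v) s := by
    intro s hs
    rw [uIcc_of_le zero_le_one] at hs
    have hd : DifferentiableAt ℝ ω (s • y) :=
      (hω.differentiableOn one_ne_zero).differentiableAt (hV.mem_nhds (hy s hs))
    have h1 : HasDerivAt (fun s : ℝ => s • y) y s := by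
      simpa using (hasDerivAt_id s).smul_const y
    have h2 : HasDerivAt (fun s : ℝ => ω (s • y)) (fderiv ℝ ω (s • y) y) s :=
      hd.hasFDerivAt.comp_hasDerivAt s h1
    have h3 : HasDerivAt (fun s : ℝ => ev (ω (s • y))) (ev (fderiv ℝ ω (s • y) y)) s :=
      ev.hasFDerivAt.comp_hasDerivAt s h2
    have h4 := (hasDerivAt_pow (d + 1) s).mul h3
    refine h4.congr_deriv ?_
    simp only [_root_.smul_apply, _root_.add_apply, smul_eq_mul]
    have h5 : ∀ A : Form N (d + 1), ev A = A v := fun A => rfl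
    rw [h5, h5]
    simp
  have hcont : ContinuousOn (fun s : ℝ =>
      (((d + 1 : ℝ) * s ^ d) • ω (s • y) + s ^ (d + 1) • fderiv ℝ ω (s • y) y) v)
      (uIcc (0 : ℝ) 1) := by
    rw [uIcc_of_le zero_le_one]
    have hm : ContinuousOn (fun s : ℝ => s • y) (Icc 0 1) := by fun_prop
    have h1 : ContinuousOn (fun s : ℝ => ω (s • y)) (Icc 0 1) := hω.continuousOn.comp hm hy
    have h2 : ContinuousOn (fun s : ℝ => fderiv ℝ ω (s • y)) (Icc 0 1) :=
      (hω.continuousOn_fderiv_of_isOpen hV le_rfl).comp hm hy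
    refine ev.continuous.comp_continuousOn (ContinuousOn.add ?_ ?_)
    · have hp : ContinuousOn (fun s : ℝ => (d + 1 : ℝ) * s ^ d) (Icc 0 1) := by fun_prop
      exact hp.smul h1
    · have hp : ContinuousOn (fun s : ℝ => s ^ (d + 1)) (Icc 0 1) := by fun_prop
      exact hp.smul (h2.clm_apply continuousOn_const)
  have := intervalIntegral.integral_eq_sub_of_hasDerivAt hderiv hcont.intervalIntegrable
  rw [intervalIntegral.integral_of_le zero_le_one, integral_Ioc_eq_integral_Ioo] at this
  rw [this]
  simp [ev]

lemma stokes_cone {d N : ℕ} {σ : (Fin (d + 1) → ℝ) → (Fin N → ℝ)}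
    (h1 : C1OnOpenFaces N (d + 1) σ) (hs : SatisfiesStokes σ)
    {V : Set (Fin N → ℝ)} {ω : (Fin N → ℝ) → Form N (d + 1)} (hV : IsOpen V)
    (hsub : cone σ '' simplexSet (d + 2) ⊆ V) (hA : ∀ y ∈ V, IsAlternatingForm (ω y))
    (hω : ContDiffOn ℝ 1 ω V) :
    ∫ x in interior (simplexSet (d + 2)), pullbackDensityD (cone σ) ω x =
      (∫ b in interior (simplexSet (d + 1)), pullbackDensity σ ω b) -
      ∑ i : Fin (d + 2), (-1 : ℝ) ^ (i : ℕ) *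
        ∫ b in interior (simplexSet (d + 1)),
          pullbackDensity (cone (σ ∘ faceMap d i)) ω b := by
  obtain ⟨hfv, hfvf, hst⟩ := hs
  have hσ0 := h1.1
  have hσ1 := h1.2.1
  have hdiff : ∀ y ∈ V, DifferentiableAt ℝ ω y := fun y hy =>
    (hω.differentiableOn one_ne_zero).differentiableAt (hV.mem_nhds hy)
  have hDc := hω.continuousOn_fderiv_of_isOpen hV le_rfl
  have hDA : ∀ y ∈ V, ∀ u, IsAlternatingForm (fderiv ℝ ω y u) := fun y hy u =>
    alternating_fderiv hV hA hy (hdiff y hy) u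
  have hmem : ∀ z ∈ Icc (0 : ℝ) 1 ×ˢ simplexSet (d + 1), z.1 • σ z.2 ∈ V := fun z hz =>
    hsub (smul_mem_cone_image hz)
  have hcyl : Ioo (0 : ℝ) 1 ×ˢ interior (simplexSet (d + 1)) ⊆
      Icc (0 : ℝ) 1 ×ˢ simplexSet (d + 1) := prod_mono Ioo_subset_Icc_self interior_subset
  -- the cone integral
  obtain ⟨-, hXint, hX⟩ := cone_density hσ0 hσ1 hfv
    (Ω := fun y => dForm (fderiv ℝ ω y)) (continuous_dForm.comp_continuousOn (hDc.mono hsub))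
    (fun y hy => isAlternatingForm_dForm (hDA y (hsub hy)))
  set X : ℝ × (Fin (d + 1) → ℝ) → ℝ := fun z =>
    (z.1 ^ (d + 1) • contract (dForm (fderiv ℝ ω (z.1 • σ z.2))) (σ z.2)) (tup σ z.2) with hXdef
  set Y : ℝ × (Fin (d + 1) → ℝ) → ℝ := fun z =>
    (((d + 1 : ℝ) * z.1 ^ d) • ω (z.1 • σ z.2) +
      z.1 ^ (d + 1) • fderiv ℝ ω (z.1 • σ z.2) (σ z.2)) (tup σ z.2) with hYdef
  set Z : ℝ × (Fin (d + 1) → ℝ) → ℝ := fun z => pullbackDensityD σ (kap ω z.1) z.2 with hZdef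
  have hXYZ : X =ᵐ[cylMeasure (d + 1)] fun z => Y z - Z z := by
    filter_upwards [ae_cyl] with z hz
    have hz' := hmem z (hcyl hz)
    simp only [hXdef, hYdef, hZdef, pullbackDensityD_eq, pullbackDensity_eq]
    exact cartan (hdiff _ hz') (hA _ hz') _
  have hYint : Integrable Y (cylMeasure (d + 1)) := by
    refine integrable_param hfv (E := fun z => ((d + 1 : ℝ) * z.1 ^ d) • ω (z.1 • σ z.2) +
      z.1 ^ (d + 1) • fderiv ℝ ω (z.1 • σ z.2) (σ z.2)) ?_ ?_
    · have hσ := continuousOn_cyl hσ0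
      have hm := continuousOn_fst.smul hσ
      refine ContinuousOn.add ?_ ?_
      · exact (continuousOn_const.mul (continuousOn_fst.pow d)).smul
          (hω.continuousOn.comp hm hmem)
      · exact (continuousOn_fst.pow (d + 1)).smul ((hDc.comp hm hmem).clm_apply hσ)
    · intro z hz
      exact isAlternatingForm_add (isAlternatingForm_smul (hA _ (hmem z hz)) _)
        (isAlternatingForm_smul (hDA _ (hmem z hz) _) _)
  have hZint : Integrable Z (cylMeasure (d + 1)) := by
    refine (hYint.sub hXint).congr ?_
    filter_upwards [hXYZ] with z hz
    simp only [Pi.sub_apply, hz]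
    ring
  have hYval : ∫ z, Y z ∂(cylMeasure (d + 1)) =
      ∫ b in interior (simplexSet (d + 1)), pullbackDensity σ ω b := by
    unfold cylMeasure at hYint ⊢
    rw [integral_prod_symm _ hYint]
    refine setIntegral_congr_fun isOpen_interior.measurableSet fun b hb => ?_
    exact radial_ftc hV hω (y := σ b) (fun s hs => hmem (s, b) ⟨hs, interior_subset hb⟩)
      (tup σ b)
  have hface : ∀ i : Fin (d + 2),
      Integrable (fun z : ℝ × (Fin d → ℝ) => pullbackDensity (σ ∘ faceMap d i) (kap ω z.1) z.2)
        (cylMeasure d) ∧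
      ∫ b in interior (simplexSet (d + 1)), pullbackDensity (cone (σ ∘ faceMap d i)) ω b =
        ∫ z : ℝ × (Fin d → ℝ), pullbackDensity (σ ∘ faceMap d i) (kap ω z.1) z.2
          ∂(cylMeasure d) := by
    intro i
    have hτ := c1_left (h1.2.2 i)
    have himg : cone (σ ∘ faceMap d i) '' simplexSet (d + 1) ⊆ V := by
      rintro _ ⟨a, ha, rfl⟩
      obtain ⟨s, hs, b, hb, rfl⟩ := exists_pMap ha
      rw [cone_pMap]
      exact hmem (s, faceMap d i b) ⟨hs, faceMap_mem i hb⟩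
    exact (cone_density hτ.1 hτ.2 (hfvf i) (hω.continuousOn.mono himg)
      (fun y hy => hA y (himg hy))).2
  have hZval : ∫ z, Z z ∂(cylMeasure (d + 1)) =
      ∑ i : Fin (d + 2), (-1 : ℝ) ^ (i : ℕ) *
        ∫ b in interior (simplexSet (d + 1)),
          pullbackDensity (cone (σ ∘ faceMap d i)) ω b := by
    unfold cylMeasure at hZint ⊢
    rw [integral_prod _ hZint]
    have hstep : ∀ s ∈ Ioo (0 : ℝ) 1,
        ∫ b in interior (simplexSet (d + 1)), Z (s, b) =
        ∑ i : Fin (d + 2), (-1 : ℝ) ^ (i : ℕ) *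
          ∫ b in interior (simplexSet d), pullbackDensity (σ ∘ faceMap d i) (kap ω s) b := by
      intro s hs
      refine hst ((fun y => s • y) ⁻¹' V) (kap ω s) (hV.preimage (continuous_const_smul s)) ?_ ?_
        (contDiffOn_kap hω s)
      · rintro _ ⟨b, hb, rfl⟩
        exact hmem (s, b) ⟨Ioo_subset_Icc_self hs, hb⟩
      · intro y hy
        exact isAlternatingForm_smul (isAlternatingForm_contract (hA _ hy) _) _
    rw [setIntegral_congr_fun measurableSet_Ioo hstep, integral_finsetSum]
    · refine Finset.sum_congr rfl fun i _ => ?_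
      obtain ⟨hi, hv⟩ := hface i
      rw [integral_const_mul, hv]
      unfold cylMeasure at hi ⊢
      rw [integral_prod _ hi]
    · intro i _
      obtain ⟨hi, -⟩ := hface i
      unfold cylMeasure at hi
      exact hi.integral_prod_left.const_mul _
  rw [pullbackDensityD_eq, hX, integral_congr_ae hXYZ, integral_sub hYint hZint, hYval, hZval]

/-- **Proposition 3.4.** If `σ : Δ_{d+1} → ℝ^N` (with `d + 1 ≥ 1`) is C¹ on all open
faces and satisfies Stokes, then so does its cone `σ̂ : Δ_{d+2} → ℝ^N`. -/
theorem cone_satisfiesStokes {d N : ℕ} (σ : (Fin (d + 1) → ℝ) → (Fin N → ℝ))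
    (h1 : C1OnOpenFaces N (d + 1) σ) (hs : SatisfiesStokes σ) :
    C1OnOpenFaces N (d + 2) (cone σ) ∧ SatisfiesStokes (cone σ) := by
  refine ⟨c1_cone _ σ h1, finiteVolume_cone h1.1 h1.2.1 hs.1, fun i => ?_, ?_⟩
  · refine Fin.cases ?_ (fun j => ?_) i
    · rw [cone_comp_face_zero]; exact hs.1
    · rw [cone_comp_face_succ]
      have hτ := c1_left (h1.2.2 j)
      exact finiteVolume_cone hτ.1 hτ.2 (hs.2.1 j)
  · intro V ω hV hsub hA hω
    rw [stokes_cone h1 hs hV hsub hA hω]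
    conv_rhs => rw [Fin.sum_univ_succ]
    rw [cone_comp_face_zero, sub_eq_add_neg, ← Finset.sum_neg_distrib]
    congr 1
    · simp
    · refine Finset.sum_congr rfl fun i _ => ?_
      rw [cone_comp_face_succ]
      simp [pow_succ]

end
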